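/- arXiv:1503.02429 — 2 statements merged into one kernel-verified Lean document; each statement's English description precedes it below -/
import Mathlib

section
/- Let λ > 0, a ∈ ℝ, and ψ(x) = λ|x|²/4 − a·ln|x| on ℝ²∖{0}. Suppose γ: ℝ × [0,T) → ℝ²∖{0} evolves by ψMCF, and for every t the closed curve γ(·,t) has turning number 1; let A(t) be its signed area and w(t) its winding number about the origin. Then A′(t) = −2π − λA(t) + 2πa·w(t). In particular, if w(t) = 0 for all t and A(0) = A₀ > 0, then A(t) = (A₀ + 2π/λ)e^{−λt} − 2π/λ, which vanishes exactly at t = (1/λ)·ln(1 + λA₀/(2π)). -/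
noncomputable section
open Real Set

def dot2 (v w : ℝ × ℝ) : ℝ := v.1 * w.1 + v.2 * w.2

def nrm2 (v : ℝ × ℝ) : ℝ := Real.sqrt (v.1 ^ 2 + v.2 ^ 2)

def Jrot (v : ℝ × ℝ) : ℝ × ℝ := (-v.2, v.1)

structure IsClosedCurve (γ : ℝ → ℝ × ℝ) : Prop where
  smooth : ContDiff ℝ (⊤ : ℕ∞) γ
  periodic : Function.Periodic γ (2 * π)
  regular : ∀ u, deriv γ u ≠ 0

def tangentC (γ : ℝ → ℝ × ℝ) (u : ℝ) : ℝ × ℝ := (nrm2 (deriv γ u))⁻¹ • deriv γ u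

def normalC (γ : ℝ → ℝ × ℝ) (u : ℝ) : ℝ × ℝ := Jrot (tangentC γ u)

def arcDeriv {F : Type*} [NormedAddCommGroup F] [NormedSpace ℝ F]
    (γ : ℝ → ℝ × ℝ) (h : ℝ → F) (u : ℝ) : F :=
  (nrm2 (deriv γ u))⁻¹ • deriv h u

def curvature (γ : ℝ → ℝ × ℝ) (u : ℝ) : ℝ :=
  dot2 (arcDeriv γ (tangentC γ) u) (normalC γ u)

def psiCurv (ψ : ℝ × ℝ → ℝ) (γ : ℝ → ℝ × ℝ) (u : ℝ) : ℝ :=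
  curvature γ u - fderiv ℝ ψ (γ u) (normalC γ u)

def IsPsiMinimal (ψ : ℝ × ℝ → ℝ) (γ : ℝ → ℝ × ℝ) : Prop :=
  ∀ u, psiCurv ψ γ u = 0

def signedArea (γ : ℝ → ℝ × ℝ) : ℝ :=
  (1/2) * ∫ u in (0:ℝ)..(2*π), ((γ u).1 * (deriv γ u).2 - (γ u).2 * (deriv γ u).1)

def turningNumber (γ : ℝ → ℝ × ℝ) : ℝ :=
  (1/(2*π)) * ∫ u in (0:ℝ)..(2*π), curvature γ u * nrm2 (deriv γ u)

def windingNumber (γ : ℝ → ℝ × ℝ) : ℝ :=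
  (1/(2*π)) * ∫ u in (0:ℝ)..(2*π),
    ((γ u).1 * (deriv γ u).2 - (γ u).2 * (deriv γ u).1) / (nrm2 (γ u))^2

def hess2 (ψ : ℝ × ℝ → ℝ) (x v : ℝ × ℝ) : ℝ :=
  fderiv ℝ (fun y => fderiv ℝ ψ y v) x v

def SmoothFamily (γ : ℝ → ℝ → ℝ × ℝ) : Prop :=
  ContDiff ℝ (⊤ : ℕ∞) fun p : ℝ × ℝ => γ p.1 p.2

/-!
Wherever the flow moves a closed curve by `f N`, its area changes at the rate `-∫ f ds`:
differentiate `det (γ, γ_u)` in time and move the `u`-derivative of the velocity onto `γ` by parts.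
For `f = k_ψ` the integral of `k` is `2π` times the turning number. Since the gradient of `ψ` at `x`
is `(λ/2 - a/|x|²) x` and `⟨γ, N⟩ ds = -det (γ, γ_u) du`, the two terms of the gradient integrate to
multiples of the area and of the winding number. For constant turning and winding numbers the result
is a linear equation with constant coefficients.
-/

section Calculus

variable {E F : Type*} [NormedAddCommGroup E] [NormedSpace ℝ E]
  [NormedAddCommGroup F] [NormedSpace ℝ F]

theorem hasDerivAt_intervalIntegral_of_continuous {f f' : ℝ → ℝ → E}
    (hf : ∀ t, Continuous (f t)) (hf' : Continuous fun p : ℝ × ℝ => f' p.1 p.2)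
    (hderiv : ∀ t u, HasDerivAt (fun τ => f τ u) (f' t u) t) (a b t : ℝ) :
    HasDerivAt (fun τ => ∫ u in a..b, f τ u) (∫ u in a..b, f' t u) t := by
  obtain ⟨C, hC⟩ := ((isCompact_closedBall t 1).prod isCompact_uIcc).exists_bound_of_continuousOn
    (s := Metric.closedBall t 1 ×ˢ uIcc a b) hf'.continuousOn
  have hf't : Continuous (f' t) := by fun_prop
  exact (intervalIntegral.hasDerivAt_integral_of_dominated_loc_of_deriv_le
    (bound := fun _ => C) (Metric.closedBall_mem_nhds t one_pos)
    (.of_forall fun τ => (hf τ).aestronglyMeasurable)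
    ((hf t).intervalIntegrable a b) hf't.aestronglyMeasurable
    (.of_forall fun u hu τ hτ => hC (τ, u) ⟨hτ, uIoc_subset_uIcc hu⟩)
    intervalIntegrable_const (.of_forall fun u _ τ _ => hderiv τ u)).2

theorem periodic_deriv {f : ℝ → E} {c : ℝ} (hf : Function.Periodic f c) :
    Function.Periodic (deriv f) c := fun u => by
  rw [← deriv_comp_add_const, funext hf]

theorem hasDerivAt_fst_slice {f : ℝ × ℝ → E} (hf : Differentiable ℝ f) (t u : ℝ) :
    HasDerivAt (fun τ => f (τ, u)) (fderiv ℝ f (t, u) (1, 0)) t :=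
  (hf (t, u)).hasFDerivAt.comp_hasDerivAt t ((hasDerivAt_id t).prodMk (hasDerivAt_const t u))

theorem hasDerivAt_snd_slice {f : ℝ × ℝ → E} (hf : Differentiable ℝ f) (t u : ℝ) :
    HasDerivAt (fun v => f (t, v)) (fderiv ℝ f (t, u) (0, 1)) u :=
  (hf (t, u)).hasFDerivAt.comp_hasDerivAt u ((hasDerivAt_const u t).prodMk (hasDerivAt_id u))

theorem contDiff_fderiv_apply_const {f : E → F} (hf : ContDiff ℝ 2 f) (v : E) :
    ContDiff ℝ 1 fun x => fderiv ℝ f x v :=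
  (hf.fderiv_right (by norm_num)).clm_apply contDiff_const

theorem fderiv_fderiv_apply_comm {f : E → F} (hf : ContDiff ℝ 2 f) (x v w : E) :
    fderiv ℝ (fun y => fderiv ℝ f y v) x w = fderiv ℝ (fun y => fderiv ℝ f y w) x v := by
  have hdiff : DifferentiableAt ℝ (fderiv ℝ f) x :=
    (hf.fderiv_right (m := 1) (by norm_num)).differentiable one_ne_zero x
  have hsymm : IsSymmSndFDerivAt ℝ f x := hf.contDiffAt.isSymmSndFDerivAt (by simp)
  simpa [fderiv_clm_apply hdiff (differentiableAt_const _)] using hsymm w v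

theorem exists_continuous_partial_derivs {γ : ℝ → ℝ → E}
    (hγ : ContDiff ℝ 2 fun p : ℝ × ℝ => γ p.1 p.2) :
    ∃ γt γu γtu : ℝ × ℝ → E, Continuous γt ∧ Continuous γu ∧ Continuous γtu ∧
      (∀ t u, HasDerivAt (fun τ => γ τ u) (γt (t, u)) t) ∧
      (∀ t u, HasDerivAt (γ t) (γu (t, u)) u) ∧
      (∀ t u, HasDerivAt (fun τ => γu (τ, u)) (γtu (t, u)) t) ∧
      (∀ t u, HasDerivAt (fun v => γt (t, v)) (γtu (t, u)) u) := by
  set G : ℝ × ℝ → E := fun p => γ p.1 p.2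
  have hG : Differentiable ℝ G := hγ.differentiable two_ne_zero
  have hGt := contDiff_fderiv_apply_const hγ (1, 0)
  have hGu := contDiff_fderiv_apply_const hγ (0, 1)
  refine ⟨fun p => fderiv ℝ G p (1, 0), fun p => fderiv ℝ G p (0, 1),
    fun p => fderiv ℝ (fun q => fderiv ℝ G q (0, 1)) p (1, 0), hGt.continuous, hGu.continuous,
    (hGu.continuous_fderiv one_ne_zero).clm_apply continuous_const,
    hasDerivAt_fst_slice hG, hasDerivAt_snd_slice hG,
    hasDerivAt_fst_slice (hGu.differentiable one_ne_zero), fun t u => ?_⟩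
  exact (hasDerivAt_snd_slice (hGt.differentiable one_ne_zero) t u).congr_deriv
    (fderiv_fderiv_apply_comm hγ _ _ _)

theorem eq_exp_of_hasDerivAt_affine {f : ℝ → ℝ} {lam c t₀ t : ℝ} (hlam : lam ≠ 0) (ht : t₀ ≤ t)
    (hf : ∀ s ∈ Icc t₀ t, HasDerivAt f (-c - lam * f s) s) :
    f t = (f t₀ + c / lam) * exp (-lam * (t - t₀)) - c / lam := by
  have hconserved : ∀ s ∈ Icc t₀ t,
      HasDerivAt (fun τ => (f τ + c / lam) * exp (lam * (τ - t₀))) 0 s := fun s hs => by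
    have hexp := (((hasDerivAt_id s).sub_const t₀).const_mul lam).exp
    refine (((hf s hs).add_const (c / lam)).mul hexp).congr_deriv ?_
    simp only [id]
    field_simp
    ring
  have hconst := constant_of_has_deriv_right_zero
    (fun s hs => (hconserved s hs).continuousAt.continuousWithinAt)
    (fun s hs => (hconserved s (Ico_subset_Icc_self hs)).hasDerivWithinAt) t ⟨ht, le_rfl⟩
  rw [sub_self, mul_zero, exp_zero, mul_one] at hconst
  rw [← hconst, mul_assoc, ← exp_add, neg_mul, add_neg_cancel, exp_zero, mul_one,
    add_sub_cancel_right]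

theorem affine_exp_eq_zero_iff {lam c A₀ : ℝ} (hlam : lam ≠ 0) (hc : c ≠ 0)
    (hpos : 0 < 1 + lam * A₀ / c) (t : ℝ) :
    (A₀ + c / lam) * exp (-lam * t) - c / lam = 0 ↔ t = 1 / lam * log (1 + lam * A₀ / c) := by
  have hfactor : (A₀ + c / lam) * exp (-lam * t) - c / lam
      = c / lam * (exp (log (1 + lam * A₀ / c) - lam * t) - 1) := by
    rw [sub_eq_add_neg (log _), exp_add, exp_log hpos, neg_mul]
    field_simp
    ring
  rw [hfactor, mul_eq_zero, or_iff_right (div_ne_zero hc hlam), sub_eq_zero, exp_eq_one_iff,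
    sub_eq_zero, one_div, eq_inv_mul_iff_mul_eq₀ hlam, eq_comm]

end Calculus

section Plane

/-- The determinant of two plane vectors, that is, the area form of `ℝ²`, by which signed area and
winding number are written. -/
def det2 (v w : ℝ × ℝ) : ℝ := v.1 * w.2 - v.2 * w.1

theorem det2_swap (v w : ℝ × ℝ) : det2 w v = -det2 v w := by
  simp only [det2]
  ring

@[fun_prop]
theorem continuous_det2 {X : Type*} [TopologicalSpace X] {f g : X → ℝ × ℝ} (hf : Continuous f)
    (hg : Continuous g) : Continuous fun x => det2 (f x) (g x) := by
  unfold det2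
  fun_prop

theorem hasDerivAt_det2 {f g : ℝ → ℝ × ℝ} {f' g' : ℝ × ℝ} {t : ℝ} (hf : HasDerivAt f f' t)
    (hg : HasDerivAt g g' t) :
    HasDerivAt (fun τ => det2 (f τ) (g τ)) (det2 f' (g t) + det2 (f t) g') t := by
  have hfst {h : ℝ → ℝ × ℝ} {h' : ℝ × ℝ} (hh : HasDerivAt h h' t) :
      HasDerivAt (fun τ => (h τ).1) h'.1 t :=
    (ContinuousLinearMap.fst ℝ ℝ ℝ).hasFDerivAt.comp_hasDerivAt t hh
  have hsnd {h : ℝ → ℝ × ℝ} {h' : ℝ × ℝ} (hh : HasDerivAt h h' t) :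
      HasDerivAt (fun τ => (h τ).2) h'.2 t :=
    (ContinuousLinearMap.snd ℝ ℝ ℝ).hasFDerivAt.comp_hasDerivAt t hh
  refine (((hfst hf).mul (hsnd hg)).sub ((hsnd hf).mul (hfst hg))).congr_deriv ?_
  simp only [det2]
  ring

theorem integral_det2_by_parts {f g f' g' : ℝ → ℝ × ℝ} (hf : ∀ u, HasDerivAt f (f' u) u)
    (hg : ∀ u, HasDerivAt g (g' u) u) (hf' : Continuous f') (hg' : Continuous g') (a b : ℝ) :
    ∫ u in a..b, det2 (f u) (g' u)
      = det2 (f b) (g b) - det2 (f a) (g a) - ∫ u in a..b, det2 (f' u) (g u) := by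
  have hfc : Continuous f := continuous_iff_continuousAt.2 fun u => (hf u).continuousAt
  have hgc : Continuous g := continuous_iff_continuousAt.2 fun u => (hg u).continuousAt
  have hl : Continuous fun u => det2 (f' u) (g u) := by fun_prop
  have hr : Continuous fun u => det2 (f u) (g' u) := by fun_prop
  rw [← intervalIntegral.integral_eq_sub_of_hasDerivAt (fun u _ => hasDerivAt_det2 (hf u) (hg u))
      ((hl.add hr).intervalIntegrable a b),
    intervalIntegral.integral_add (hl.intervalIntegrable a b) (hr.intervalIntegrable a b),
    add_sub_cancel_left]

theorem sq_nrm2 (v : ℝ × ℝ) : nrm2 v ^ 2 = v.1 ^ 2 + v.2 ^ 2 :=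
  sq_sqrt (by positivity)

theorem fst_sq_add_snd_sq_pos {v : ℝ × ℝ} (hv : v ≠ 0) : 0 < v.1 ^ 2 + v.2 ^ 2 := by
  by_contra! h
  exact hv (Prod.ext (by simp only [Prod.fst_zero]; nlinarith [sq_nonneg v.2])
    (by simp only [Prod.snd_zero]; nlinarith [sq_nonneg v.1]))

theorem nrm2_pos {v : ℝ × ℝ} (hv : v ≠ 0) : 0 < nrm2 v :=
  sqrt_pos.2 (fst_sq_add_snd_sq_pos hv)

theorem continuous_dot2 {X : Type*} [TopologicalSpace X] {f g : X → ℝ × ℝ} (hf : Continuous f)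
    (hg : Continuous g) : Continuous fun x => dot2 (f x) (g x) := by
  unfold dot2
  fun_prop

theorem continuous_Jrot : Continuous Jrot := by
  unfold Jrot
  fun_prop

theorem continuous_nrm2 : Continuous nrm2 := by
  unfold nrm2
  fun_prop

theorem contDiff_nrm2_comp {X : Type*} [NormedAddCommGroup X] [NormedSpace ℝ X]
    {n : WithTop ℕ∞} {f : X → ℝ × ℝ} (hf : ContDiff ℝ n f) (hne : ∀ x, f x ≠ 0) :
    ContDiff ℝ n fun x => nrm2 (f x) :=
  ((hf.fst.pow 2).add (hf.snd.pow 2)).sqrt fun x => (fst_sq_add_snd_sq_pos (hne x)).ne'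

theorem det2_smul_Jrot (c : ℝ) (v : ℝ × ℝ) : det2 (c • Jrot v) v = -(c * nrm2 v ^ 2) := by
  simp only [det2, Jrot, sq_nrm2, Prod.smul_fst, Prod.smul_snd, smul_eq_mul]
  ring

theorem dot2_smul_Jrot (c : ℝ) (x v : ℝ × ℝ) : dot2 x (c • Jrot v) = -(c * det2 x v) := by
  simp only [dot2, det2, Jrot, Prod.smul_fst, Prod.smul_snd, smul_eq_mul]
  ring

end Plane

section Curve

variable {γ : ℝ → ℝ × ℝ}

theorem normalC_eq_smul_Jrot (γ : ℝ → ℝ × ℝ) (u : ℝ) :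
    normalC γ u = (nrm2 (deriv γ u))⁻¹ • Jrot (deriv γ u) := by
  simp [normalC, tangentC, Jrot]

theorem det2_smul_normalC_deriv {u : ℝ} (hu : deriv γ u ≠ 0) (c : ℝ) :
    det2 (c • normalC γ u) (deriv γ u) = -(c * nrm2 (deriv γ u)) := by
  have := (nrm2_pos hu).ne'
  rw [normalC_eq_smul_Jrot, smul_smul, det2_smul_Jrot]
  field_simp

theorem dot2_normalC_mul_speed {u : ℝ} (hu : deriv γ u ≠ 0) (x : ℝ × ℝ) :
    dot2 x (normalC γ u) * nrm2 (deriv γ u) = -det2 x (deriv γ u) := by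
  have := (nrm2_pos hu).ne'
  rw [normalC_eq_smul_Jrot, dot2_smul_Jrot]
  field_simp

theorem periodic_tangentC {c : ℝ} (hγ : Function.Periodic γ c) :
    Function.Periodic (tangentC γ) c := fun u => by
  simp only [tangentC, periodic_deriv hγ u]

theorem periodic_normalC {c : ℝ} (hγ : Function.Periodic γ c) :
    Function.Periodic (normalC γ) c := fun u => by
  simp only [normalC, periodic_tangentC hγ u]

theorem periodic_psiCurv {c : ℝ} (ψ : ℝ × ℝ → ℝ) (hγ : Function.Periodic γ c) :
    Function.Periodic (psiCurv ψ γ) c := fun u => by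
  simp only [psiCurv, curvature, arcDeriv, hγ u, periodic_deriv hγ u, periodic_normalC hγ u,
    periodic_deriv (periodic_tangentC hγ) u]

theorem continuous_curvature (hγ : ContDiff ℝ 2 γ) (hreg : ∀ u, deriv γ u ≠ 0) :
    Continuous (curvature γ) := by
  have hγ' : ContDiff ℝ 1 (deriv γ) := hγ.deriv'
  have hinv_speed : ContDiff ℝ 1 fun u => (nrm2 (deriv γ u))⁻¹ :=
    (contDiff_nrm2_comp hγ' hreg).inv fun u => (nrm2_pos (hreg u)).ne'
  have htangent : ContDiff ℝ 1 (tangentC γ) := hinv_speed.smul hγ'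
  exact continuous_dot2 (hinv_speed.continuous.smul htangent.continuous_deriv_one)
    (continuous_Jrot.comp htangent.continuous)

theorem integral_curvature_mul_speed (γ : ℝ → ℝ × ℝ) :
    ∫ u in (0 : ℝ)..2 * π, curvature γ u * nrm2 (deriv γ u) = 2 * π * turningNumber γ := by
  rw [turningNumber]
  field_simp

theorem integral_det2_deriv (γ : ℝ → ℝ × ℝ) :
    ∫ u in (0 : ℝ)..2 * π, det2 (γ u) (deriv γ u) = 2 * signedArea γ := by
  simp only [signedArea, det2]
  ring

theorem integral_det2_deriv_div_sq_nrm2 (γ : ℝ → ℝ × ℝ) :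
    ∫ u in (0 : ℝ)..2 * π, det2 (γ u) (deriv γ u) / nrm2 (γ u) ^ 2
      = 2 * π * windingNumber γ := by
  simp only [windingNumber, det2]
  field_simp

end Curve

section FirstVariation

variable {γ : ℝ → ℝ → ℝ × ℝ}

theorem hasDerivAt_integral_det2_deriv (hγ : ContDiff ℝ 2 fun p : ℝ × ℝ => γ p.1 p.2)
    (a b t : ℝ) :
    HasDerivAt (fun τ => ∫ u in a..b, det2 (γ τ u) (deriv (γ τ) u))
      (2 * (∫ u in a..b, det2 (deriv (fun τ => γ τ u) t) (deriv (γ t) u))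
        + (det2 (γ t b) (deriv (fun τ => γ τ b) t)
          - det2 (γ t a) (deriv (fun τ => γ τ a) t))) t := by
  obtain ⟨γt, γu, γtu, hγt, hγu, hγtu, ht, hu, hut, htu⟩ := exists_continuous_partial_derivs hγ
  have hγc (τ : ℝ) : Continuous (γ τ) := hγ.continuous.comp (.prodMk_right τ)
  have hγ_pair : Continuous fun p : ℝ × ℝ => γ p.1 p.2 := hγ.continuous
  have hparts := integral_det2_by_parts (hu t) (htu t) (by fun_prop) (by fun_prop) a b
  simp only [(ht _ _).deriv, (hu _ _).deriv]
  refine (hasDerivAt_intervalIntegral_of_continuous (fun τ => by fun_prop) (by fun_prop)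
    (fun τ u => hasDerivAt_det2 (ht τ u) (hut τ u)) a b t).congr_deriv ?_
  rw [intervalIntegral.integral_add (Continuous.intervalIntegrable (by fun_prop) _ _)
    (Continuous.intervalIntegrable (by fun_prop) _ _), hparts]
  simp only [det2_swap (γt _), intervalIntegral.integral_neg]
  ring

theorem hasDerivAt_signedArea_of_normal_velocity (hγ : ContDiff ℝ 2 fun p : ℝ × ℝ => γ p.1 p.2)
    {t : ℝ} (hper : Function.Periodic (γ t) (2 * π)) (hreg : ∀ u, deriv (γ t) u ≠ 0)
    {f : ℝ → ℝ} (hf : Function.Periodic f (2 * π))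
    (hvel : ∀ u, deriv (fun τ => γ τ u) t = f u • normalC (γ t) u) :
    HasDerivAt (fun τ => signedArea (γ τ))
      (-∫ u in (0 : ℝ)..2 * π, f u * nrm2 (deriv (γ t) u)) t := by
  refine ((hasDerivAt_integral_det2_deriv hγ 0 (2 * π) t).const_mul (1 / 2)).congr_deriv ?_
  simp only [hvel, det2_smul_normalC_deriv (hreg _), intervalIntegral.integral_neg, hper.eq, hf.eq,
    (periodic_normalC hper).eq]
  ring

end FirstVariation

section LambdaAPotential

/-- The potential `ψ(x) = λ|x|²/4 - a ln|x|` of the flow. Its value at the origin is the junk value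
coming from `log 0 = 0`. -/
def lambdaAPotential (lam a : ℝ) (x : ℝ × ℝ) : ℝ := lam * nrm2 x ^ 2 / 4 - a * log (nrm2 x)

theorem fderiv_lambdaAPotential (lam a : ℝ) {x : ℝ × ℝ} (hx : x ≠ 0) (v : ℝ × ℝ) :
    fderiv ℝ (lambdaAPotential lam a) x v = (lam / 2 - a / nrm2 x ^ 2) * dot2 x v := by
  have hpos := fst_sq_add_snd_sq_pos hx
  have hsq : lambdaAPotential lam a
      = fun y => lam / 4 * (y.1 ^ 2 + y.2 ^ 2) - a / 2 * log (y.1 ^ 2 + y.2 ^ 2) := by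
    ext y
    rw [lambdaAPotential, sq_nrm2, nrm2, log_sqrt (by positivity)]
    ring
  have hfst : HasFDerivAt Prod.fst (ContinuousLinearMap.fst ℝ ℝ ℝ) x := hasFDerivAt_fst
  have hsnd : HasFDerivAt Prod.snd (ContinuousLinearMap.snd ℝ ℝ ℝ) x := hasFDerivAt_snd
  have hq : HasFDerivAt (fun y : ℝ × ℝ => y.1 ^ 2 + y.2 ^ 2) _ x := (hfst.pow 2).add (hsnd.pow 2)
  have hψ : HasFDerivAt
      (fun y => lam / 4 * (y.1 ^ 2 + y.2 ^ 2) - a / 2 * log (y.1 ^ 2 + y.2 ^ 2)) _ x :=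
    (hq.const_mul (lam / 4)).sub ((hq.log hpos.ne').const_mul (a / 2))
  rw [hsq, hψ.fderiv]
  simp only [Nat.add_one_sub_one, pow_one, nsmul_eq_mul, Nat.cast_ofNat, smul_add, sub_apply,
    add_apply, smul_apply, ContinuousLinearMap.coe_fst', smul_eq_mul,
    ContinuousLinearMap.coe_snd', sq_nrm2, dot2]
  field_simp
  ring

variable {γ : ℝ → ℝ × ℝ}

theorem psiCurv_lambdaAPotential_mul_speed (lam a : ℝ) {u : ℝ} (hu : deriv γ u ≠ 0) (h0 : γ u ≠ 0) :
    psiCurv (lambdaAPotential lam a) γ u * nrm2 (deriv γ u)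
      = curvature γ u * nrm2 (deriv γ u) + lam / 2 * det2 (γ u) (deriv γ u)
        - a * (det2 (γ u) (deriv γ u) / nrm2 (γ u) ^ 2) := by
  rw [psiCurv, fderiv_lambdaAPotential lam a h0]
  linear_combination (-(lam / 2 - a / nrm2 (γ u) ^ 2)) * dot2_normalC_mul_speed hu (γ u)

theorem integral_psiCurv_lambdaAPotential (lam a : ℝ) (hγ : ContDiff ℝ 2 γ)
    (hreg : ∀ u, deriv γ u ≠ 0) (h0 : ∀ u, γ u ≠ 0) :
    ∫ u in (0 : ℝ)..2 * π, psiCurv (lambdaAPotential lam a) γ u * nrm2 (deriv γ u)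
      = 2 * π * turningNumber γ + lam * signedArea γ - 2 * π * a * windingNumber γ := by
  have hγc := hγ.continuous
  have hγ' : Continuous (deriv γ) := hγ.continuous_deriv (by norm_num)
  have hturn : Continuous fun u => curvature γ u * nrm2 (deriv γ u) :=
    (continuous_curvature hγ hreg).mul (continuous_nrm2.comp hγ')
  have harea : Continuous fun u => det2 (γ u) (deriv γ u) := by fun_prop
  have hwind : Continuous fun u => det2 (γ u) (deriv γ u) / nrm2 (γ u) ^ 2 :=
    harea.div ((continuous_nrm2.comp hγc).pow 2) fun u => (pow_pos (nrm2_pos (h0 u)) 2).ne'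
  have hturn_area : Continuous fun u =>
      curvature γ u * nrm2 (deriv γ u) + lam / 2 * det2 (γ u) (deriv γ u) :=
    hturn.add (harea.const_mul _)
  simp only [psiCurv_lambdaAPotential_mul_speed lam a (hreg _) (h0 _)]
  rw [intervalIntegral.integral_sub
      (hturn_area.intervalIntegrable _ _)
      ((hwind.const_mul _).intervalIntegrable _ _),
    intervalIntegral.integral_add (hturn.intervalIntegrable _ _)
      ((harea.const_mul _).intervalIntegrable _ _),
    intervalIntegral.integral_const_mul, intervalIntegral.integral_const_mul,
    integral_curvature_mul_speed, integral_det2_deriv, integral_det2_deriv_div_sq_nrm2]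
  ring

end LambdaAPotential

theorem area_evolution_lambda_a_density_general (lam a : ℝ) {T : ℝ} {γ : ℝ → ℝ → ℝ × ℝ}
    (hfam : ContDiff ℝ 2 fun p : ℝ × ℝ => γ p.1 p.2)
    (hper : ∀ t ∈ Ico 0 T, Function.Periodic (γ t) (2 * π))
    (hreg : ∀ t ∈ Ico 0 T, ∀ u, deriv (γ t) u ≠ 0)
    (havoid : ∀ t ∈ Ico 0 T, ∀ u, γ t u ≠ 0)
    (hflow : ∀ t ∈ Ico 0 T, ∀ u,
      deriv (fun τ => γ τ u) t = psiCurv (lambdaAPotential lam a) (γ t) u • normalC (γ t) u) :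
    (∀ t ∈ Ico 0 T, HasDerivAt (fun τ => signedArea (γ τ))
      (-(2 * π * turningNumber (γ t)) - lam * signedArea (γ t)
        + 2 * π * a * windingNumber (γ t)) t)
    ∧ ∀ c, lam ≠ 0 →
      (∀ t ∈ Ico 0 T, 2 * π * (turningNumber (γ t) - a * windingNumber (γ t)) = c) →
      ∀ t ∈ Ico 0 T,
        signedArea (γ t) = (signedArea (γ 0) + c / lam) * exp (-lam * t) - c / lam
        ∧ (c ≠ 0 → 0 < 1 + lam * signedArea (γ 0) / c →
          (signedArea (γ t) = 0 ↔ t = 1 / lam * log (1 + lam * signedArea (γ 0) / c))) := by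
  have hevol : ∀ t ∈ Ico 0 T, HasDerivAt (fun τ => signedArea (γ τ))
      (-(2 * π * turningNumber (γ t)) - lam * signedArea (γ t)
        + 2 * π * a * windingNumber (γ t)) t := fun t ht => by
    refine (hasDerivAt_signedArea_of_normal_velocity hfam (hper t ht) (hreg t ht)
      (periodic_psiCurv _ (hper t ht)) (hflow t ht)).congr_deriv ?_
    have hγt : ContDiff ℝ 2 (γ t) := hfam.comp (contDiff_prodMk_right t)
    rw [integral_psiCurv_lambdaAPotential lam a hγt (hreg t ht) (havoid t ht)]
    ring
  refine ⟨hevol, fun c hlam hc t ht => ?_⟩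
  have hsol : signedArea (γ t) = (signedArea (γ 0) + c / lam) * exp (-lam * t) - c / lam := by
    have haffine : ∀ s ∈ Icc 0 t,
        HasDerivAt (fun τ => signedArea (γ τ)) (-c - lam * signedArea (γ s)) s := fun s hs => by
      have hs' : s ∈ Ico 0 T := ⟨hs.1, hs.2.trans_lt ht.2⟩
      exact (hevol s hs').congr_deriv (by linear_combination -hc s hs')
    simpa only [sub_zero] using eq_exp_of_hasDerivAt_affine hlam ht.1 haffine
  exact ⟨hsol, fun hc0 hpos => hsol ▸ affine_exp_eq_zero_iff hlam hc0 hpos t⟩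

/-- evolution of the signed area under ψMCF for
ψ(x) = λ|x|²/4 − a ln|x| on ℝ²∖{0}. -/
theorem area_evolution_lambda_a_density
    (lam a : ℝ) (hlam : 0 < lam)
    (T : ℝ) (hT : 0 < T) (γ : ℝ → ℝ → ℝ × ℝ)
    (hfam : SmoothFamily γ)
    (hclosed : ∀ t ∈ Set.Ico (0:ℝ) T, IsClosedCurve (γ t))
    (havoid : ∀ t ∈ Set.Ico (0:ℝ) T, ∀ u : ℝ, γ t u ≠ 0)
    (hflow : ∀ t ∈ Set.Ico (0:ℝ) T, ∀ u : ℝ,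
      deriv (fun τ => γ τ u) t
        = psiCurv (fun x => lam * (nrm2 x) ^ 2 / 4 - a * Real.log (nrm2 x))
            (γ t) u • normalC (γ t) u)
    (hturn : ∀ t ∈ Set.Ico (0:ℝ) T, turningNumber (γ t) = 1) :
    (∀ t ∈ Set.Ico (0:ℝ) T,
        HasDerivAt (fun τ => signedArea (γ τ))
          (-(2 * π) - lam * signedArea (γ t) + 2 * π * a * windingNumber (γ t)) t)
    ∧ (∀ A₀ : ℝ, (∀ t ∈ Set.Ico (0:ℝ) T, windingNumber (γ t) = 0) →
        signedArea (γ 0) = A₀ → 0 < A₀ →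
        ∀ t ∈ Set.Ico (0:ℝ) T,
          signedArea (γ t) = (A₀ + 2 * π / lam) * Real.exp (-lam * t) - 2 * π / lam
          ∧ (signedArea (γ t) = 0 ↔ t = (1 / lam) * Real.log (1 + lam * A₀ / (2 * π)))) := by
  obtain ⟨hevol, hsol⟩ := area_evolution_lambda_a_density_general lam a
    (contDiff_infty.1 hfam 2) (fun t ht => (hclosed t ht).periodic)
    (fun t ht => (hclosed t ht).regular) havoid hflow
  refine ⟨fun t ht => by simpa only [hturn t ht, mul_one] using hevol t ht, ?_⟩
  rintro _ hw rfl hpos t ht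
  have hc : ∀ s ∈ Ico 0 T, 2 * π * (turningNumber (γ s) - a * windingNumber (γ s)) = 2 * π :=
    fun s hs => by rw [hturn s hs, hw s hs, mul_zero, sub_zero, mul_one]
  obtain ⟨hformula, hzero⟩ := hsol (2 * π) hlam.ne' hc t ht
  exact ⟨hformula, hzero (by positivity) (by positivity)⟩
end
end

section
/- Let ψ(x) = φ(|x|) be a radial density on ℝ²∖{0} and let γ be a closed ψ-minimal plane curve whose image avoids the origin. If R = max_u |γ(u)|, then φ′(R) ≤ −1/R. Consequently, if R₀ > 0 and φ′(r) > −1/r for all r ∈ (0, R₀], then there is no closed ψ-minimal curve whose image is contained in the punctured disk {x : 0 < |x| ≤ R₀}. -/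
noncomputable section
open Real Set

/-!
At a point `x = γ u` of maximal distance `R` from the origin, `x` is orthogonal to the curve, so
`x = h N` with `h = ⟨x, N⟩` and `h ^ 2 = R ^ 2`. The second derivative of `|γ| ^ 2` is nonpositive
there, which says `h k ≤ -1`: the curve bends at least as fast as the circle of radius `R` that
encloses it. For a radial density `k_ψ = 0` reads `k = φ' R * (h / R)`, and multiplying by `h` gives
`R * φ' R = h k ≤ -1`.
-/

theorem differentiableAt_deriv_of_contDiffAt {𝕜 F : Type*} [NontriviallyNormedField 𝕜]
    [NormedAddCommGroup F] [NormedSpace 𝕜 F] {f : 𝕜 → F} {x : 𝕜} (hf : ContDiffAt 𝕜 2 f x) :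
    DifferentiableAt 𝕜 (deriv f) x := by
  have hf' : ContDiffAt 𝕜 1 (fderiv 𝕜 f) x := hf.fderiv_right (by norm_num)
  exact (hf'.differentiableAt one_ne_zero).clm_apply (differentiableAt_const 1)

theorem deriv_deriv_nonpos_of_isLocalMax {f : ℝ → ℝ} {u : ℝ} (hmax : IsLocalMax f u)
    (hf : ContinuousAt f u) : deriv (deriv f) u ≤ 0 := by
  by_contra! hpos
  -- By the second derivative test `u` is also a local minimum, so `f` is locally constant.
  have hmin : IsLocalMin f u := isLocalMin_of_deriv_deriv_pos hpos hmax.deriv_eq_zero hf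
  have hconst : f =ᶠ[nhds u] fun _ => f u := by
    filter_upwards [hmin, hmax] with t hge hle using le_antisymm hle hge
  have hzero : deriv (deriv f) u = 0 := by simpa using hconst.deriv.deriv_eq
  exact hpos.ne' hzero

theorem exists_forall_le_of_continuous_periodic {α : Type*} [LinearOrder α] [TopologicalSpace α]
    [ClosedIciTopology α] {f : ℝ → α} {c : ℝ} (hf : Continuous f) (hper : Function.Periodic f c)
    (hc : c ≠ 0) : ∃ u, ∀ t, f t ≤ f u := by
  obtain ⟨_, ⟨u, rfl⟩, hu⟩ :=
    (hper.compact_of_continuous hc hf).exists_isGreatest (range_nonempty f)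
  exact ⟨u, fun t => hu (mem_range_self t)⟩

theorem nrm2_sq (v : ℝ × ℝ) : nrm2 v ^ 2 = dot2 v v := by
  rw [nrm2, Real.sq_sqrt (by positivity), dot2, sq, sq]

theorem nrm2_nonneg (v : ℝ × ℝ) : 0 ≤ nrm2 v := Real.sqrt_nonneg _

theorem nrm2_pos_iff {v : ℝ × ℝ} : 0 < nrm2 v ↔ v ≠ 0 := by
  have hsum : v.1 ^ 2 + v.2 ^ 2 = 0 ↔ v = 0 := by
    rw [add_eq_zero_iff_of_nonneg (sq_nonneg _) (sq_nonneg _), sq_eq_zero_iff, sq_eq_zero_iff,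
      Prod.ext_iff, Prod.fst_zero, Prod.snd_zero]
  rw [nrm2, Real.sqrt_pos, (by positivity : 0 ≤ v.1 ^ 2 + v.2 ^ 2).lt_iff_ne', Ne, hsum]

theorem dot2_comm (v w : ℝ × ℝ) : dot2 v w = dot2 w v := by
  simp only [dot2, mul_comm]

theorem dot2_add_left (v w x : ℝ × ℝ) : dot2 (v + w) x = dot2 v x + dot2 w x := by
  simp only [dot2, Prod.fst_add, Prod.snd_add]
  ring

theorem dot2_smul_left (c : ℝ) (v w : ℝ × ℝ) : dot2 (c • v) w = c * dot2 v w := by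
  simp only [dot2, Prod.smul_fst, Prod.smul_snd, smul_eq_mul]
  ring

theorem dot2_smul_right (c : ℝ) (v w : ℝ × ℝ) : dot2 v (c • w) = c * dot2 v w := by
  rw [dot2_comm, dot2_smul_left, dot2_comm]

theorem Jrot_smul (c : ℝ) (v : ℝ × ℝ) : Jrot (c • v) = c • Jrot v := by
  simp [Jrot]

theorem dot2_Jrot_self (v : ℝ × ℝ) : dot2 v (Jrot v) = 0 := by
  simp only [dot2, Jrot]
  ring

theorem dot2_mul_dot2_add_dot2_Jrot_mul_dot2_Jrot (x y v : ℝ × ℝ) :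
    dot2 x v * dot2 y v + dot2 x (Jrot v) * dot2 y (Jrot v) = nrm2 v ^ 2 * dot2 x y := by
  rw [nrm2_sq]
  simp only [dot2, Jrot]
  ring

theorem hasDerivAt_dot2 {f g : ℝ → ℝ × ℝ} {f' g' : ℝ × ℝ} {u : ℝ}
    (hf : HasDerivAt f f' u) (hg : HasDerivAt g g' u) :
    HasDerivAt (fun t => dot2 (f t) (g t)) (dot2 f' (g u) + dot2 (f u) g') u := by
  have hf₁ : HasDerivAt (fun t => (f t).1) f'.1 u := hf.fst
  have hf₂ : HasDerivAt (fun t => (f t).2) f'.2 u := hf.snd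
  have hg₁ : HasDerivAt (fun t => (g t).1) g'.1 u := hg.fst
  have hg₂ : HasDerivAt (fun t => (g t).2) g'.2 u := hg.snd
  refine ((hf₁.mul hg₁).add (hf₂.mul hg₂)).congr_deriv ?_
  simp only [dot2]
  ring

theorem hasFDerivAt_nrm2 {x : ℝ × ℝ} (hx : x ≠ 0) :
    HasFDerivAt nrm2 ((nrm2 x)⁻¹ • (x.1 • ContinuousLinearMap.fst ℝ ℝ ℝ +
      x.2 • ContinuousLinearMap.snd ℝ ℝ ℝ)) x := by
  have hpos : 0 < x.1 ^ 2 + x.2 ^ 2 := Real.sqrt_pos.1 (nrm2_pos_iff.2 hx)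
  have hfst : HasFDerivAt Prod.fst (ContinuousLinearMap.fst ℝ ℝ ℝ) x := hasFDerivAt_fst
  have hsnd : HasFDerivAt Prod.snd (ContinuousLinearMap.snd ℝ ℝ ℝ) x := hasFDerivAt_snd
  refine (((hfst.pow 2).add (hsnd.pow 2)).sqrt hpos.ne').congr_fderiv ?_
  ext <;> simp [nrm2] <;> field_simp

theorem fderiv_radial {φ : ℝ → ℝ} {x : ℝ × ℝ} (hφ : DifferentiableAt ℝ φ (nrm2 x)) (hx : x ≠ 0)
    (w : ℝ × ℝ) :
    fderiv ℝ (fun y => φ (nrm2 y)) x w = deriv φ (nrm2 x) * (dot2 x w / nrm2 x) := by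
  have h := hφ.hasDerivAt.comp_hasFDerivAt x (hasFDerivAt_nrm2 hx)
  rw [HasFDerivAt.fderiv (f := fun y => φ (nrm2 y)) h, dot2, div_eq_inv_mul]
  rfl

section PlaneCurve

variable {γ : ℝ → ℝ × ℝ} {u : ℝ}

theorem nrm2_tangentC (hreg : deriv γ u ≠ 0) : nrm2 (tangentC γ u) = 1 := by
  have hspeed := nrm2_pos_iff.2 hreg
  rw [← pow_left_inj₀ (nrm2_nonneg _) zero_le_one two_ne_zero, nrm2_sq, tangentC, dot2_smul_left,
    dot2_smul_right, ← nrm2_sq]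
  field_simp

theorem dot2_normalC_mul_dot2_normalC (hreg : deriv γ u ≠ 0) {x : ℝ × ℝ}
    (horth : dot2 x (deriv γ u) = 0) (y : ℝ × ℝ) :
    dot2 x (normalC γ u) * dot2 y (normalC γ u) = dot2 x y := by
  have h := dot2_mul_dot2_add_dot2_Jrot_mul_dot2_Jrot x y (tangentC γ u)
  have hT : dot2 x (tangentC γ u) = 0 := by rw [tangentC, dot2_smul_right, horth, mul_zero]
  rwa [hT, zero_mul, zero_add, nrm2_tangentC hreg, one_pow, one_mul] at h

theorem nrm2_sq_mul_curvature (hγ : DifferentiableAt ℝ (deriv γ) u)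
    (hreg : deriv γ u ≠ 0) :
    nrm2 (deriv γ u) ^ 2 * curvature γ u = dot2 (deriv (deriv γ) u) (normalC γ u) := by
  have hspeed : nrm2 (deriv γ u) ≠ 0 := (nrm2_pos_iff.2 hreg).ne'
  have hinv : DifferentiableAt ℝ (fun t => (nrm2 (deriv γ t))⁻¹) u :=
    ((hasFDerivAt_nrm2 hreg).differentiableAt.comp u hγ).inv hspeed
  have hT : deriv (tangentC γ) u = (nrm2 (deriv γ u))⁻¹ • deriv (deriv γ) u +
      deriv (fun t => (nrm2 (deriv γ t))⁻¹) u • deriv γ u :=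
    (hinv.hasDerivAt.smul hγ.hasDerivAt).deriv
  have horth : dot2 (deriv γ u) (normalC γ u) = 0 := by
    rw [normalC, tangentC, Jrot_smul, dot2_smul_right, dot2_Jrot_self, mul_zero]
  rw [curvature, arcDeriv, hT, dot2_smul_left, dot2_add_left, dot2_smul_left, dot2_smul_left, horth]
  field_simp
  ring

theorem isLocalMax_dot2_self (hmax : IsLocalMax (fun t => nrm2 (γ t)) u) :
    IsLocalMax (fun t => dot2 (γ t) (γ t)) u := by
  filter_upwards [hmax] with t ht
  rw [← nrm2_sq, ← nrm2_sq]
  exact pow_le_pow_left₀ (nrm2_nonneg _) ht 2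

theorem dot2_deriv_eq_zero_of_isLocalMax (hγ : DifferentiableAt ℝ γ u)
    (hmax : IsLocalMax (fun t => nrm2 (γ t)) u) : dot2 (γ u) (deriv γ u) = 0 := by
  have h := (isLocalMax_dot2_self hmax).hasDerivAt_eq_zero
    (hasDerivAt_dot2 hγ.hasDerivAt hγ.hasDerivAt)
  rw [dot2_comm (deriv γ u)] at h
  linarith

theorem dot2_deriv_deriv_le_of_isLocalMax (hγ : ContDiffAt ℝ 2 γ u)
    (hmax : IsLocalMax (fun t => nrm2 (γ t)) u) :
    dot2 (γ u) (deriv (deriv γ) u) ≤ -nrm2 (deriv γ u) ^ 2 := by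
  have hγ' : HasDerivAt (deriv γ) (deriv (deriv γ) u) u :=
    (differentiableAt_deriv_of_contDiffAt hγ).hasDerivAt
  have hfirst : deriv (fun t => dot2 (γ t) (γ t)) =ᶠ[nhds u]
      fun t => 2 * dot2 (γ t) (deriv γ t) := by
    filter_upwards [hγ.eventually (by simp)] with t ht
    have hd := (ht.differentiableAt two_ne_zero).hasDerivAt
    rw [(hasDerivAt_dot2 hd hd).deriv, dot2_comm (deriv γ t), two_mul]
  have hγu := hγ.differentiableAt two_ne_zero
  have hsecond : deriv (deriv fun t => dot2 (γ t) (γ t)) u =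
      2 * (dot2 (deriv γ u) (deriv γ u) + dot2 (γ u) (deriv (deriv γ) u)) := by
    rw [hfirst.deriv_eq, ((hasDerivAt_dot2 hγu.hasDerivAt hγ').const_mul 2).deriv]
  have hnonpos := deriv_deriv_nonpos_of_isLocalMax (isLocalMax_dot2_self hmax)
    (hasDerivAt_dot2 hγu.hasDerivAt hγu.hasDerivAt).continuousAt
  rw [hsecond, ← nrm2_sq] at hnonpos
  linarith

theorem dot2_normalC_mul_curvature_le_neg_one (hγ : ContDiffAt ℝ 2 γ u) (hreg : deriv γ u ≠ 0)
    (hmax : IsLocalMax (fun t => nrm2 (γ t)) u) :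
    dot2 (γ u) (normalC γ u) * curvature γ u ≤ -1 := by
  have hspeed : 0 < nrm2 (deriv γ u) ^ 2 := pow_pos (nrm2_pos_iff.2 hreg) 2
  have horth := dot2_deriv_eq_zero_of_isLocalMax (hγ.differentiableAt two_ne_zero) hmax
  refine le_of_mul_le_mul_left ?_ hspeed
  calc nrm2 (deriv γ u) ^ 2 * (dot2 (γ u) (normalC γ u) * curvature γ u)
      = dot2 (γ u) (normalC γ u) * dot2 (deriv (deriv γ) u) (normalC γ u) := by
        rw [← nrm2_sq_mul_curvature (differentiableAt_deriv_of_contDiffAt hγ) hreg]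
        ring
    _ = dot2 (γ u) (deriv (deriv γ) u) := dot2_normalC_mul_dot2_normalC hreg horth _
    _ ≤ -nrm2 (deriv γ u) ^ 2 := dot2_deriv_deriv_le_of_isLocalMax hγ hmax
    _ = nrm2 (deriv γ u) ^ 2 * -1 := by ring

theorem deriv_le_neg_one_div_of_isLocalMax {φ : ℝ → ℝ} (hφ : DifferentiableAt ℝ φ (nrm2 (γ u)))
    (hγ : ContDiffAt ℝ 2 γ u) (hreg : deriv γ u ≠ 0) (h0 : γ u ≠ 0)
    (hmin : psiCurv (fun x => φ (nrm2 x)) γ u = 0)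
    (hmax : IsLocalMax (fun t => nrm2 (γ t)) u) :
    deriv φ (nrm2 (γ u)) ≤ -(1 / nrm2 (γ u)) := by
  have hR : 0 < nrm2 (γ u) := nrm2_pos_iff.2 h0
  have horth := dot2_deriv_eq_zero_of_isLocalMax (hγ.differentiableAt two_ne_zero) hmax
  have hk : curvature γ u =
      deriv φ (nrm2 (γ u)) * (dot2 (γ u) (normalC γ u) / nrm2 (γ u)) := by
    rw [← fderiv_radial hφ h0]
    exact sub_eq_zero.1 hmin
  have hsupport : dot2 (γ u) (normalC γ u) * dot2 (γ u) (normalC γ u) = nrm2 (γ u) ^ 2 := by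
    rw [dot2_normalC_mul_dot2_normalC hreg horth, nrm2_sq]
  rw [← neg_div, le_div_iff₀ hR]
  calc deriv φ (nrm2 (γ u)) * nrm2 (γ u)
      = deriv φ (nrm2 (γ u)) * (nrm2 (γ u) ^ 2 / nrm2 (γ u)) := by field_simp
    _ = dot2 (γ u) (normalC γ u) * curvature γ u := by
        rw [← hsupport, hk]
        ring
    _ ≤ -1 := dot2_normalC_mul_curvature_le_neg_one hγ hreg hmax

end PlaneCurve

theorem psiMinimal_max_radius_general {φ : ℝ → ℝ} (hφ : DifferentiableOn ℝ φ (Ioi 0))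
    {γ : ℝ → ℝ × ℝ} (hγ : ContDiff ℝ 2 γ) (hreg : ∀ u, deriv γ u ≠ 0) (h0 : ∀ u, γ u ≠ 0)
    (hmin : IsPsiMinimal (fun x => φ (nrm2 x)) γ) :
    (∀ u, IsLocalMax (fun t => nrm2 (γ t)) u → deriv φ (nrm2 (γ u)) ≤ -(1 / nrm2 (γ u))) ∧
      ∀ c ≠ 0, Function.Periodic γ c → ∃ u, deriv φ (nrm2 (γ u)) ≤ -(1 / nrm2 (γ u)) := by
  have hlocal : ∀ u, IsLocalMax (fun t => nrm2 (γ t)) u →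
      deriv φ (nrm2 (γ u)) ≤ -(1 / nrm2 (γ u)) := fun u hmax =>
    deriv_le_neg_one_div_of_isLocalMax (hφ.differentiableAt (Ioi_mem_nhds (nrm2_pos_iff.2 (h0 u))))
      hγ.contDiffAt (hreg u) (h0 u) (hmin u) hmax
  refine ⟨hlocal, fun c hc hper => ?_⟩
  obtain ⟨u, hu⟩ := exists_forall_le_of_continuous_periodic
    (continuous_nrm2.comp hγ.continuous) (hper.comp nrm2) hc
  exact ⟨u, hlocal u (.of_forall hu)⟩

/-- at the maximal distance R from the origin of a closed
ψ-minimal curve (ψ radial) one has φ'(R) ≤ −1/R; hence no closed ψ-minimal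
curve lies in a punctured disk where φ'(r) > −1/r. -/
theorem psiMinimal_max_radius
    (φ : ℝ → ℝ) (hφ : ContDiffOn ℝ (⊤ : ℕ∞) φ (Set.Ioi 0)) :
    (∀ (γ : ℝ → ℝ × ℝ) (R : ℝ), IsClosedCurve γ → (∀ u, γ u ≠ 0) →
      IsPsiMinimal (fun x => φ (nrm2 x)) γ →
      (∀ u, nrm2 (γ u) ≤ R) → (∃ u, nrm2 (γ u) = R) →
      deriv φ R ≤ -(1 / R))
    ∧ (∀ R₀ : ℝ, 0 < R₀ → (∀ r : ℝ, 0 < r → r ≤ R₀ → -(1 / r) < deriv φ r) →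
        ¬ ∃ γ : ℝ → ℝ × ℝ, IsClosedCurve γ
          ∧ IsPsiMinimal (fun x => φ (nrm2 x)) γ
          ∧ ∀ u, 0 < nrm2 (γ u) ∧ nrm2 (γ u) ≤ R₀) := by
  have general {γ : ℝ → ℝ × ℝ} (hγ : IsClosedCurve γ) :=
    psiMinimal_max_radius_general (hφ.differentiableOn (by simp))
      (contDiff_infty.1 hγ.smooth 2) hγ.regular
  constructor
  · rintro γ _ hγ h0 hmin hle ⟨u, rfl⟩
    exact (general hγ h0 hmin).1 u (.of_forall hle)
  · rintro R₀ - hφ' ⟨γ, hγ, hmin, hdisk⟩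
    obtain ⟨u, hu⟩ := (general hγ (fun u => nrm2_pos_iff.1 (hdisk u).1) hmin).2 (2 * π)
      two_pi_pos.ne' hγ.periodic
    exact (hφ' _ (hdisk u).1 (hdisk u).2).not_ge hu
end
end
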